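/- arXiv:2512.12351 — 5 statements merged into one kernel-verified Lean document; each statement's English description precedes it below -/
import Mathlib

section
/- Let N ≥ 1 be an integer, let Ω ⊆ ℝ^N be a nonempty open set, let p ∈ (1, +∞), and let μ be a nonnegative, nontrivial (i.e. μ ≠ 0), finite Borel measure on (0,1). Let u : ℝ^N → ℝ be measurable. If ∫_{(0,1)} ( c_{N,s,p} ∬_𝒬 |u(x) − u(y)|^p / |x−y|^{N+ps} dx dy ) dμ(s) = 0, then there exists a constant c ∈ ℝ such that u = c almost everywhere in ℝ^N. -/
/-!
The weight `c_{N,s,p}` is positive for `0 < s < 1`, so a vanishing mixed energy forces the Gagliardo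
energy over `𝒬` to vanish for some `s`. Then `u x = u y` for almost every pair `(x, y)` with `x ∈ Ω`
or `y ∈ Ω`. By Fubini, and because `Ω` is not null, some fixed `x ∈ Ω` satisfies `u x = u y` for
almost every `y`, and `u x` is the constant.
-/

open MeasureTheory Set
open scoped ENNReal

/-- The normalizing constant `c_{N,s,p}` of the fractional `p`-Laplacian. -/
noncomputable def cNsp (N : ℕ) (s p : ℝ) : ℝ :=
  s * (2 : ℝ) ^ (2 * s - 1) * Real.Gamma ((p * s + p + N - 2) / 2) /
    (Real.pi ^ ((N : ℝ) / 2) * Real.Gamma (1 - s))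

section Gagliardo

variable {X Y : Type*} [MetricSpace X] [MetricSpace Y]

/-- The integrand `d(u x, u y) ^ p / d(x, y) ^ q` of the Gagliardo seminorm of a map between metric
spaces; the fractional order is `s` when `q = N + p * s` on an `N`-dimensional space. -/
noncomputable def gagliardoIntegrand (p q : ℝ) (u : X → Y) (z : X × X) : ℝ≥0∞ :=
  ENNReal.ofReal (dist (u z.1) (u z.2) ^ p / dist z.1 z.2 ^ q)

/-- The Gagliardo energy of `u` over the pairs with at least one entry in `Ω`. -/
noncomputable def gagliardoEnergy [MeasurableSpace X] (ν : Measure X) (p q : ℝ) (Ω : Set X)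
    (u : X → Y) : ℝ≥0∞ :=
  ∫⁻ z in (Ωᶜ ×ˢ Ωᶜ)ᶜ, gagliardoIntegrand p q u z ∂(ν.prod ν)

theorem eq_of_gagliardoIntegrand_eq_zero {p q : ℝ} {u : X → Y} {x y : X}
    (h : gagliardoIntegrand p q u (x, y) = 0) : u x = u y := by
  by_contra hne
  have hu : 0 < dist (u x) (u y) := dist_pos.2 hne
  have hxy : 0 < dist x y := dist_pos.2 (ne_of_apply_ne u hne)
  have hpos : 0 < dist (u x) (u y) ^ p / dist x y ^ q := by positivity
  exact hpos.not_ge (ENNReal.ofReal_eq_zero.1 h)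

variable [MeasurableSpace X] [OpensMeasurableSpace X] [SecondCountableTopology X]
  [MeasurableSpace Y] [OpensMeasurableSpace Y] [SecondCountableTopology Y]
  {ν : Measure X} {Ω : Set X} {u : X → Y}

theorem measurable_gagliardoIntegrand (p : ℝ) (hu : Measurable u) :
    Measurable fun w : ℝ × X × X => gagliardoIntegrand p w.1 u w.2 := by
  unfold gagliardoIntegrand
  fun_prop

theorem ae_eq_of_gagliardoEnergy_eq_zero {p q : ℝ} (hu : Measurable u)
    (h : gagliardoEnergy ν p q Ω u = 0) :
    ∀ᵐ z ∂ν.prod ν, z ∈ (Ωᶜ ×ˢ Ωᶜ)ᶜ → u z.1 = u z.2 := by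
  have hmeas : Measurable (gagliardoIntegrand p q u) :=
    (measurable_gagliardoIntegrand p hu).comp measurable_prodMk_left
  have hzero := (lintegral_eq_zero_iff hmeas).1 h
  filter_upwards [(ae_restrict_iff (hmeas (measurableSet_singleton 0))).1 hzero] with z hz hzΩ
  exact eq_of_gagliardoIntegrand_eq_zero (hz hzΩ)

variable [SFinite ν]

theorem measurable_gagliardoEnergy (p : ℝ) (hu : Measurable u) :
    Measurable fun q => gagliardoEnergy ν p q Ω u :=
  (measurable_gagliardoIntegrand p hu).lintegral_prod_right'

theorem exists_ae_eq_const_of_gagliardoEnergy_eq_zero {p q : ℝ} (hΩ : ν Ω ≠ 0) (hu : Measurable u)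
    (h : gagliardoEnergy ν p q Ω u = 0) : ∃ c, ∀ᵐ x ∂ν, u x = c := by
  have hae := Measure.ae_ae_of_ae_prod (ae_eq_of_gagliardoEnergy_eq_zero hu h)
  obtain ⟨x, hxΩ, hx⟩ := ((frequently_ae_mem_iff.2 hΩ).and_eventually hae).exists
  refine ⟨u x, ?_⟩
  filter_upwards [hx] with y hxy
  exact (hxy fun hmem => hmem.1 hxΩ).symm

theorem exists_ae_eq_const_of_setLIntegral_mul_gagliardoEnergy_eq_zero {S : Type*}
    [MeasurableSpace S] {μ : Measure S} {A : Set S} {w : S → ℝ≥0∞} {p : ℝ} {q : S → ℝ}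
    (hA : μ A ≠ 0) (hw : AEMeasurable w (μ.restrict A)) (hw_ne : ∀ s ∈ A, w s ≠ 0)
    (hq : AEMeasurable q (μ.restrict A)) (hΩ : ν Ω ≠ 0) (hu : Measurable u)
    (h : ∫⁻ s in A, w s * gagliardoEnergy ν p (q s) Ω u ∂μ = 0) :
    ∃ c, ∀ᵐ x ∂ν, u x = c := by
  have henergy := (measurable_gagliardoEnergy (ν := ν) (Ω := Ω) p hu).comp_aemeasurable hq
  obtain ⟨s, hsA, hs⟩ :=
    Measure.exists_mem_of_measure_ne_zero_of_ae hA
      ((lintegral_eq_zero_iff' (hw.mul henergy)).1 h)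
  exact exists_ae_eq_const_of_gagliardoEnergy_eq_zero hΩ hu
    ((mul_eq_zero.1 hs).resolve_left (hw_ne s hsA))

end Gagliardo

section NormalizingConstant

variable {N : ℕ} {p s : ℝ}

theorem gamma_arg_cNsp_pos (hp : 0 < p) (hNp : 2 ≤ N + p) (hs : 0 < s) :
    0 < (p * s + p + N - 2) / 2 := by
  linarith [mul_pos hp hs]

theorem cNsp_pos (hp : 0 < p) (hNp : 2 ≤ N + p) (hs : s ∈ Ioo (0 : ℝ) 1) : 0 < cNsp N s p := by
  have hnum := Real.Gamma_pos_of_pos (gamma_arg_cNsp_pos hp hNp hs.1)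
  have hden := Real.Gamma_pos_of_pos (sub_pos.2 hs.2)
  have hs_pos := hs.1
  unfold cNsp
  positivity

theorem continuousOn_cNsp (hp : 0 < p) (hNp : 2 ≤ N + p) :
    ContinuousOn (fun s => cNsp N s p) (Ioo 0 1) := by
  have hnum : ContinuousOn (fun s => Real.Gamma ((p * s + p + N - 2) / 2)) (Ioo 0 1) :=
    Real.differentiableOn_Gamma_Ioi.continuousOn.comp (by fun_prop)
      fun s hs => gamma_arg_cNsp_pos hp hNp hs.1
  have hden : ContinuousOn (fun s => Real.Gamma (1 - s)) (Ioo 0 1) :=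
    Real.differentiableOn_Gamma_Ioi.continuousOn.comp (by fun_prop) fun s hs => sub_pos.2 hs.2
  have hpow : Continuous fun s : ℝ => (2 : ℝ) ^ (2 * s - 1) :=
    Continuous.rpow continuous_const (by fun_prop) fun _ => Or.inl two_ne_zero
  refine ((continuousOn_id.mul hpow.continuousOn).mul hnum).div (continuousOn_const.mul hden) ?_
  intro s hs
  have hden_pos := Real.Gamma_pos_of_pos (sub_pos.2 hs.2)
  positivity

end NormalizingConstant

theorem statement3_general {N : ℕ} {p : ℝ} (hp : 0 < p) (hNp : 2 ≤ N + p)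
    {Y : Type*} [MetricSpace Y] [SecondCountableTopology Y] [MeasurableSpace Y]
    [OpensMeasurableSpace Y] {Ω : Set (EuclideanSpace ℝ (Fin N))} (hΩ : volume Ω ≠ 0)
    {μ : Measure ℝ} (hμ : μ (Ioo 0 1) ≠ 0) {u : EuclideanSpace ℝ (Fin N) → Y} (hu : Measurable u)
    (h : ∫⁻ s in Ioo (0 : ℝ) 1,
      ENNReal.ofReal (cNsp N s p) * gagliardoEnergy volume p (N + p * s) Ω u ∂μ = 0) :
    ∃ c, ∀ᵐ x, u x = c := by
  have hw : AEMeasurable (fun s => ENNReal.ofReal (cNsp N s p)) (μ.restrict (Ioo 0 1)) :=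
    ((continuousOn_cNsp hp hNp).aemeasurable measurableSet_Ioo).ennreal_ofReal
  exact exists_ae_eq_const_of_setLIntegral_mul_gagliardoEnergy_eq_zero hμ hw
    (fun s hs => (ENNReal.ofReal_pos.2 (cNsp_pos hp hNp hs)).ne') (by fun_prop) hΩ hu h

theorem statement3 (N : ℕ) (hN : 1 ≤ N)
    (Ω : Set (EuclideanSpace ℝ (Fin N))) (hΩ : IsOpen Ω) (hne : Ω.Nonempty)
    (p : ℝ) (hp : 1 < p)
    (μ : Measure ℝ) [IsFiniteMeasure μ] (hμ : μ ≠ 0)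
    (hsupp : μ ((Set.Ioo (0 : ℝ) 1)ᶜ) = 0)
    (u : EuclideanSpace ℝ (Fin N) → ℝ) (hu : Measurable u)
    (h : (∫⁻ s in Set.Ioo (0 : ℝ) 1,
        ENNReal.ofReal (cNsp N s p) *
          ∫⁻ z in ((Ωᶜ) ×ˢ (Ωᶜ))ᶜ,
            ENNReal.ofReal (|u z.1 - u z.2| ^ p / dist z.1 z.2 ^ ((N : ℝ) + p * s))
            ∂(volume.prod volume) ∂μ) = 0) :
    ∃ c : ℝ, ∀ᵐ x ∂(volume : Measure (EuclideanSpace ℝ (Fin N))), u x = c := by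
  have : NeZero μ := ⟨hμ⟩
  have hμ_Ioo : μ (Ioo 0 1) ≠ 0 :=
    frequently_ae_mem_iff.1 (Filter.Eventually.frequently (mem_ae_iff.2 hsupp))
  have hN_real : (1 : ℝ) ≤ N := mod_cast hN
  exact statement3_general (by linarith) (by linarith) (hΩ.measure_ne_zero volume hne) hμ_Ioo hu h
end

section
/- Let N ≥ 1 be an integer, let Ω ⊆ ℝ^N be a measurable set, let p ∈ (1, +∞), let μ be a nonnegative finite Borel measure on (0,1), and let u : ℝ^N → ℝ be measurable. Assume that the function (x,y,s) ↦ c_{N,s,p} · 𝒜(u(x) − u(y)) / |x−y|^{N+ps} is integrable on Ω × ℝ^N × (0,1) with respect to dx dy dμ(s). Then ∫_{(0,1)} ∫_Ω ( c_{N,s,p} ∫_{ℝ^N} 𝒜(u(x) − u(y)) / |x−y|^{N+ps} dy ) dx dμ(s) = − ∫_{(0,1)} ∫_{ℝ^N ∖ Ω} ( c_{N,s,p} ∫_Ω 𝒜(u(x) − u(y)) / |x−y|^{N+ps} dy ) dx dμ(s). (The inner integral over ℝ^N is the integral form of the fractional p-Laplacian (−Δ)_p^s u(x), and the inner integral over Ω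 is the nonlocal normal p-derivative 𝒩_{s,p} u(x).) -/
open MeasureTheory Set
open scoped ENNReal

/-- The function `𝒜(t) = |t|^{p-2} t` for `t ≠ 0`, and `𝒜(0) = 0`. -/
noncomputable def Afun (p t : ℝ) : ℝ := if t = 0 then 0 else |t| ^ (p - 2) * t

/-!
The kernel `𝒜(u x - u y) / |x - y| ^ (N + p s)` is antisymmetric in `(x, y)`, so by Fubini its
integral over `Ω × ℝ^N` is minus its integral over `ℝ^N × Ω`. The part over `Ω × Ω` equals its own
negative and vanishes, which leaves only the integral over `Ωᶜ × Ω`.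
-/

theorem Afun_odd (p : ℝ) : Function.Odd (Afun p) := fun t => by
  by_cases ht : t = 0 <;> simp [Afun, ht]

theorem Afun_sub_div_dist_rpow_swap {E : Type*} [PseudoMetricSpace E] (p r : ℝ) (u : E → ℝ)
    (x y : E) :
    Afun p (u y - u x) / dist y x ^ r = -(Afun p (u x - u y) / dist x y ^ r) := by
  rw [dist_comm y x, ← neg_sub (u x), Afun_odd, neg_div]

section AntisymmetricKernel

variable {E G : Type*} [MeasurableSpace E] [NormedAddCommGroup G] [NormedSpace ℝ G]
  {F : E → E → G}

theorem integral_integral_eq_neg_swap_of_antisymm {μ ν : Measure E} [SFinite μ] [SFinite ν]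
    (hF : ∀ x y, F y x = -F x y) (hint : Integrable (Function.uncurry F) (μ.prod ν)) :
    ∫ x, ∫ y, F x y ∂ν ∂μ = -∫ x, ∫ y, F x y ∂μ ∂ν :=
  calc ∫ x, ∫ y, F x y ∂ν ∂μ
      = ∫ y, ∫ x, F x y ∂μ ∂ν := integral_integral_swap hint
    _ = ∫ y, ∫ x, -F y x ∂μ ∂ν := by simp only [← hF]
    _ = -∫ y, ∫ x, F y x ∂μ ∂ν := by simp only [integral_neg]

theorem integral_integral_self_eq_zero_of_antisymm {μ : Measure E} [SFinite μ]
    (hF : ∀ x y, F y x = -F x y) (hint : Integrable (Function.uncurry F) (μ.prod μ)) :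
    ∫ x, ∫ y, F x y ∂μ ∂μ = 0 :=
  have : IsAddTorsionFree G := .of_isTorsionFree ℝ G
  self_eq_neg.mp (integral_integral_eq_neg_swap_of_antisymm hF hint)

theorem setIntegral_integral_eq_neg_compl_of_antisymm {ν : Measure E} [SFinite ν] {Ω : Set E}
    (hΩ : MeasurableSet Ω) (hF : ∀ x y, F y x = -F x y)
    (hint : Integrable (Function.uncurry F) ((ν.restrict Ω).prod ν)) :
    ∫ x in Ω, ∫ y, F x y ∂ν ∂ν = -∫ x in Ωᶜ, ∫ y in Ω, F x y ∂ν ∂ν := by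
  have hint_self : Integrable (Function.uncurry F) ((ν.restrict Ω).prod (ν.restrict Ω)) :=
    hint.mono_measure (Measure.prod_mono le_rfl Measure.restrict_le_self)
  have hint_inner : Integrable (fun x => ∫ y in Ω, F x y ∂ν) ν := by
    have hint_swap : Integrable (fun x => ∫ y in Ω, -F x y ∂ν) ν := by
      simpa only [Function.uncurry, ← hF] using hint.integral_prod_right
    simpa only [integral_neg, integrable_fun_neg_iff] using hint_swap
  calc ∫ x in Ω, ∫ y, F x y ∂ν ∂ν
      = -∫ x, ∫ y in Ω, F x y ∂ν ∂ν := integral_integral_eq_neg_swap_of_antisymm hF hint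
    _ = -(∫ x in Ω, ∫ y in Ω, F x y ∂ν ∂ν + ∫ x in Ωᶜ, ∫ y in Ω, F x y ∂ν ∂ν) := by
      rw [integral_add_compl hΩ hint_inner]
    _ = -∫ x in Ωᶜ, ∫ y in Ω, F x y ∂ν ∂ν := by
      rw [integral_integral_self_eq_zero_of_antisymm hF hint_self, zero_add]

end AntisymmetricKernel

theorem statement8_general {E S : Type*} [MeasurableSpace E] [MeasurableSpace S]
    {ν : Measure E} [SFinite ν] {μ : Measure S} [SFinite μ] {Ω : Set E} (hΩ : MeasurableSet Ω)
    {K : S → E → E → ℝ} (hK : ∀ s x y, K s y x = -K s x y)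
    (hint : Integrable (fun q : (E × E) × S => K q.2 q.1.1 q.1.2)
      (((ν.restrict Ω).prod ν).prod μ)) :
    ∫ s, ∫ x in Ω, ∫ y, K s x y ∂ν ∂ν ∂μ = -∫ s, ∫ x in Ωᶜ, ∫ y in Ω, K s x y ∂ν ∂ν ∂μ := by
  rw [← integral_neg]
  apply integral_congr_ae
  filter_upwards [hint.prod_left_ae] with s hs
  exact setIntegral_integral_eq_neg_compl_of_antisymm hΩ (hK s) hs

theorem statement8 (N : ℕ) (hN : 1 ≤ N)
    (Ω : Set (EuclideanSpace ℝ (Fin N))) (hΩ : MeasurableSet Ω)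
    (p : ℝ) (hp : 1 < p)
    (μ : Measure ℝ) [IsFiniteMeasure μ]
    (u : EuclideanSpace ℝ (Fin N) → ℝ) (hu : Measurable u)
    (hint : Integrable
      (fun q : (EuclideanSpace ℝ (Fin N) × EuclideanSpace ℝ (Fin N)) × ℝ =>
        cNsp N q.2 p * (Afun p (u q.1.1 - u q.1.2) / dist q.1.1 q.1.2 ^ ((N : ℝ) + p * q.2)))
      (((volume.restrict Ω).prod (volume : Measure (EuclideanSpace ℝ (Fin N)))).prod
        (μ.restrict (Set.Ioo 0 1)))) :
    (∫ s in Set.Ioo (0 : ℝ) 1,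
        (∫ x in Ω,
          cNsp N s p * ∫ y, Afun p (u x - u y) / dist x y ^ ((N : ℝ) + p * s)) ∂μ)
      = - ∫ s in Set.Ioo (0 : ℝ) 1,
          (∫ x in Ωᶜ,
            cNsp N s p * ∫ y in Ω, Afun p (u x - u y) / dist x y ^ ((N : ℝ) + p * s)) ∂μ := by
  simpa only [integral_const_mul] using statement8_general hΩ
    (K := fun s x y => cNsp N s p * (Afun p (u x - u y) / dist x y ^ ((N : ℝ) + p * s)))
    (fun s x y => by rw [Afun_sub_div_dist_rpow_swap, mul_neg]) hint
end

section
/- Let N ≥ 1 be an integer, let Ω ⊆ ℝ^N be a measurable set, let p ∈ (1, +∞), let μ be a nonnegative finite Borel measure on (0,1), and let u, v : ℝ^N → ℝ be measurable. Assume that (i) the function (x,y,s) ↦ c_{N,s,p} · 𝒜(u(x) − u(y)) (v(x) − v(y)) / |x−y|^{N+ps} is integrable on 𝒬 × (0,1) with respect to dx dy dμ(s); (ii) the function (x,y,s) ↦ c_{N,s,p} · 𝒜(u(x) − u(y)) v(x) / |x−y|^{N+ps} is integrable on Ω × ℝ^N × (0,1) and on (ℝ^N ∖ Ω) × Ω ×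 (0,1) with respect to dx dy dμ(s). Then (1/2) ∫_{(0,1)} c_{N,s,p} ∬_𝒬 𝒜(u(x) − u(y)) (v(x) − v(y)) / |x−y|^{N+ps} dx dy dμ(s) = ∫_{(0,1)} ∫_Ω v(x) ( c_{N,s,p} ∫_{ℝ^N} 𝒜(u(x) − u(y)) / |x−y|^{N+ps} dy ) dx dμ(s) + ∫_{(0,1)} ∫_{ℝ^N ∖ Ω} v(x) ( c_{N,s,p} ∫_Ω 𝒜(u(x) − u(y)) / |x−y|^{N+ps} dy ) dx dμ(s). -/
open MeasureTheory Set
open scoped ENNReal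

/-!
The region `𝒬` is invariant under swapping its two coordinates, and the kernel of the fractional
`p`-Laplacian changes sign under the swap. The term with `v y` on the left-hand side is therefore
the mirror image of the term with `v x`, so the left-hand side is `∬_𝒬 k x y * v x`. Splitting `𝒬`
into `Ω × ℝ^N` and `Ωᶜ × Ω` and applying Fubini gives the two terms on the right-hand side.
-/

section SymmetricRegion

variable {X : Type*}

theorem compl_prod_compl_eq_union (Ω : Set X) :
    (Ωᶜ ×ˢ Ωᶜ)ᶜ = Ω ×ˢ univ ∪ Ωᶜ ×ˢ Ω := by
  ext z
  simp only [mem_compl_iff, mem_prod, mem_union, mem_univ]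
  tauto

theorem preimage_swap_compl_prod_self (s : Set X) :
    Prod.swap ⁻¹' (s ×ˢ s)ᶜ = (s ×ˢ s)ᶜ := by
  rw [preimage_compl, preimage_swap_prod]

variable [MeasurableSpace X] {ν : Measure X} [SFinite ν]
  {E : Type*} [NormedAddCommGroup E] {f : X × X → E} {Ω : Set X} {Q : Set (X × X)}

theorem measurePreserving_swap_restrict (hQ : Prod.swap ⁻¹' Q = Q) :
    MeasurePreserving Prod.swap ((ν.prod ν).restrict Q) ((ν.prod ν).restrict Q) := by
  have hswap := (Measure.measurePreserving_swap (μ := ν) (ν := ν)).restrict_preimage_emb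
    MeasurableEquiv.prodComm.measurableEmbedding Q
  rwa [hQ] at hswap

theorem setIntegral_add_comp_swap [NormedSpace ℝ E] (hQ : Prod.swap ⁻¹' Q = Q)
    (hf : IntegrableOn f Q (ν.prod ν)) :
    ∫ z in Q, (f z + f z.swap) ∂(ν.prod ν) = (2 : ℝ) • ∫ z in Q, f z ∂(ν.prod ν) := by
  have hswap : MeasurePreserving Prod.swap ((ν.prod ν).restrict Q) ((ν.prod ν).restrict Q) :=
    measurePreserving_swap_restrict hQ
  have hemb : MeasurableEmbedding (Prod.swap : X × X → X × X) :=
    MeasurableEquiv.prodComm.measurableEmbedding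
  have hf_swap : IntegrableOn (fun z => f z.swap) Q (ν.prod ν) :=
    (hswap.integrable_comp_emb hemb).2 hf
  rw [integral_add hf hf_swap, hswap.integral_comp hemb f, two_smul]

theorem integrableOn_compl_prod_compl
    (hf : Integrable f ((ν.restrict Ω).prod ν))
    (hf' : Integrable f ((ν.restrict Ωᶜ).prod (ν.restrict Ω))) :
    IntegrableOn f (Ωᶜ ×ˢ Ωᶜ)ᶜ (ν.prod ν) := by
  rw [compl_prod_compl_eq_union]
  refine IntegrableOn.union ?_ ?_
  · rwa [IntegrableOn, ← Measure.prod_restrict, Measure.restrict_univ]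
  · rwa [IntegrableOn, ← Measure.prod_restrict]

theorem setIntegral_compl_prod_compl [NormedSpace ℝ E] (hΩ : MeasurableSet Ω)
    (hf : Integrable f ((ν.restrict Ω).prod ν))
    (hf' : Integrable f ((ν.restrict Ωᶜ).prod (ν.restrict Ω))) :
    ∫ z in (Ωᶜ ×ˢ Ωᶜ)ᶜ, f z ∂(ν.prod ν) =
      ∫ z, f z ∂((ν.restrict Ω).prod ν) + ∫ z, f z ∂((ν.restrict Ωᶜ).prod (ν.restrict Ω)) := by
  have hfQ := integrableOn_compl_prod_compl hf hf'
  have hdisj : Disjoint (Ω ×ˢ univ) (Ωᶜ ×ˢ Ω) :=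
    disjoint_compl_right.set_prod_left univ Ω
  rw [compl_prod_compl_eq_union] at hfQ ⊢
  rw [setIntegral_union hdisj (hΩ.compl.prod hΩ) hfQ.left_of_union hfQ.right_of_union,
    ← Measure.prod_restrict, ← Measure.prod_restrict, Measure.restrict_univ]

end SymmetricRegion

section Kernel

variable {X Y S 𝕜 : Type*} [MeasurableSpace X] [MeasurableSpace Y] [MeasurableSpace S] [RCLike 𝕜]

theorem integral_prod_kernel_mul {ν : Measure X} {ν' : Measure Y} [SFinite ν] [SFinite ν']
    {k : X → Y → 𝕜} {v : X → 𝕜}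
    (h : Integrable (fun z : X × Y => k z.1 z.2 * v z.1) (ν.prod ν')) :
    ∫ z, k z.1 z.2 * v z.1 ∂(ν.prod ν') = ∫ x, v x * ∫ y, k x y ∂ν' ∂ν := by
  rw [integral_prod _ h]
  simp only [integral_mul_const, mul_comm]

theorem integrable_integral_mul_integral_kernel {ν : Measure X} {ν' : Measure Y} {ρ : Measure S}
    [SFinite ν] [SFinite ν'] [SFinite ρ] {k : S → X → Y → 𝕜} {v : X → 𝕜}
    (h : Integrable (fun q : (X × Y) × S => k q.2 q.1.1 q.1.2 * v q.1.1) ((ν.prod ν').prod ρ)) :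
    Integrable (fun s => ∫ x, v x * ∫ y, k s x y ∂ν' ∂ν) ρ :=
  h.integral_prod_right.congr <| h.prod_left_ae.mono fun s hs =>
    integral_prod_kernel_mul (k := k s) hs

variable {ν : Measure X} [SFinite ν] {Ω : Set X} {v : X → 𝕜}

theorem half_mul_setIntegral_antisymm_kernel_mul_sub (hΩ : MeasurableSet Ω) {k : X → X → 𝕜}
    (hk : ∀ x y, k y x = -k x y)
    (h : Integrable (fun z : X × X => k z.1 z.2 * v z.1) ((ν.restrict Ω).prod ν))
    (h' : Integrable (fun z : X × X => k z.1 z.2 * v z.1)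
      ((ν.restrict Ωᶜ).prod (ν.restrict Ω))) :
    (1 / 2) * ∫ z in (Ωᶜ ×ˢ Ωᶜ)ᶜ, k z.1 z.2 * (v z.1 - v z.2) ∂(ν.prod ν) =
      ∫ x in Ω, v x * ∫ y, k x y ∂ν ∂ν + ∫ x in Ωᶜ, v x * ∫ y in Ω, k x y ∂ν ∂ν := by
  have symmetrize (z : X × X) : k z.1 z.2 * (v z.1 - v z.2) =
      k z.1 z.2 * v z.1 + k z.swap.1 z.swap.2 * v z.swap.1 := by
    rw [Prod.fst_swap, Prod.snd_swap, hk z.1 z.2]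
    ring
  calc (1 / 2) * ∫ z in (Ωᶜ ×ˢ Ωᶜ)ᶜ, k z.1 z.2 * (v z.1 - v z.2) ∂(ν.prod ν)
      = ∫ z in (Ωᶜ ×ˢ Ωᶜ)ᶜ, k z.1 z.2 * v z.1 ∂(ν.prod ν) := by
        simp only [symmetrize]
        rw [setIntegral_add_comp_swap (f := fun z => k z.1 z.2 * v z.1)
          (preimage_swap_compl_prod_self Ωᶜ) (integrableOn_compl_prod_compl h h'), two_smul]
        ring
    _ = _ := by
        rw [setIntegral_compl_prod_compl hΩ h h', integral_prod_kernel_mul h,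
          integral_prod_kernel_mul h']

theorem statement10_general {ρ : Measure S} [SFinite ρ] (hΩ : MeasurableSet Ω)
    {k : S → X → X → 𝕜} (hk : ∀ s x y, k s y x = -k s x y)
    (h : Integrable (fun q : (X × X) × S => k q.2 q.1.1 q.1.2 * v q.1.1)
      (((ν.restrict Ω).prod ν).prod ρ))
    (h' : Integrable (fun q : (X × X) × S => k q.2 q.1.1 q.1.2 * v q.1.1)
      (((ν.restrict Ωᶜ).prod (ν.restrict Ω)).prod ρ)) :
    (1 / 2) * ∫ s, ∫ z in (Ωᶜ ×ˢ Ωᶜ)ᶜ, k s z.1 z.2 * (v z.1 - v z.2) ∂(ν.prod ν) ∂ρ =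
      ∫ s, ∫ x in Ω, v x * ∫ y, k s x y ∂ν ∂ν ∂ρ +
        ∫ s, ∫ x in Ωᶜ, v x * ∫ y in Ω, k s x y ∂ν ∂ν ∂ρ := by
  rw [← integral_const_mul, ← integral_add (integrable_integral_mul_integral_kernel h)
    (integrable_integral_mul_integral_kernel h')]
  refine integral_congr_ae ?_
  filter_upwards [h.prod_left_ae, h'.prod_left_ae] with s hs hs'
  exact half_mul_setIntegral_antisymm_kernel_mul_sub hΩ (hk s) hs hs'

end Kernel

theorem Afun_neg (p t : ℝ) : Afun p (-t) = -Afun p t := by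
  by_cases ht : t = 0 <;> simp [Afun, ht]

/-- The integrand `c_{N,s,p} 𝒜(u(x) - u(y)) / |x - y|^{N + ps}` of the fractional `p`-Laplacian
`(-Δ)_p^s u(x)` and of the nonlocal normal derivative `𝒩_{s,p} u(x)`, normalizing constant
included. -/
noncomputable def fracPLaplaceKernel (N : ℕ) (p : ℝ) (u : EuclideanSpace ℝ (Fin N) → ℝ) (s : ℝ)
    (x y : EuclideanSpace ℝ (Fin N)) : ℝ :=
  cNsp N s p * (Afun p (u x - u y) / dist x y ^ ((N : ℝ) + p * s))

theorem fracPLaplaceKernel_swap (N : ℕ) (p : ℝ) (u : EuclideanSpace ℝ (Fin N) → ℝ) (s : ℝ)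
    (x y : EuclideanSpace ℝ (Fin N)) :
    fracPLaplaceKernel N p u s y x = -fracPLaplaceKernel N p u s x y := by
  rw [fracPLaplaceKernel, fracPLaplaceKernel, ← neg_sub (u x) (u y), Afun_neg, dist_comm y x,
    neg_div, mul_neg]

theorem statement10 (N : ℕ) (hN : 1 ≤ N)
    (Ω : Set (EuclideanSpace ℝ (Fin N))) (hΩ : MeasurableSet Ω)
    (p : ℝ) (hp : 1 < p)
    (μ : Measure ℝ) [IsFiniteMeasure μ]
    (u v : EuclideanSpace ℝ (Fin N) → ℝ) (hu : Measurable u) (hv : Measurable v)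
    -- (i) integrability on 𝒬 × (0,1)
    (hint1 : Integrable
      (fun q : (EuclideanSpace ℝ (Fin N) × EuclideanSpace ℝ (Fin N)) × ℝ =>
        cNsp N q.2 p *
          (Afun p (u q.1.1 - u q.1.2) * (v q.1.1 - v q.1.2) /
            dist q.1.1 q.1.2 ^ ((N : ℝ) + p * q.2)))
      (((volume.prod volume).restrict (((Ωᶜ) ×ˢ (Ωᶜ))ᶜ)).prod (μ.restrict (Set.Ioo 0 1))))
    -- (ii) integrability on Ω × ℝ^N × (0,1)
    (hint2 : Integrable
      (fun q : (EuclideanSpace ℝ (Fin N) × EuclideanSpace ℝ (Fin N)) × ℝ =>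
        cNsp N q.2 p *
          (Afun p (u q.1.1 - u q.1.2) * v q.1.1 /
            dist q.1.1 q.1.2 ^ ((N : ℝ) + p * q.2)))
      (((volume.restrict Ω).prod (volume : Measure (EuclideanSpace ℝ (Fin N)))).prod
        (μ.restrict (Set.Ioo 0 1))))
    -- (ii) integrability on (ℝ^N ∖ Ω) × Ω × (0,1)
    (hint3 : Integrable
      (fun q : (EuclideanSpace ℝ (Fin N) × EuclideanSpace ℝ (Fin N)) × ℝ =>
        cNsp N q.2 p *
          (Afun p (u q.1.1 - u q.1.2) * v q.1.1 /
            dist q.1.1 q.1.2 ^ ((N : ℝ) + p * q.2)))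
      (((volume.restrict (Ωᶜ)).prod (volume.restrict Ω)).prod (μ.restrict (Set.Ioo 0 1)))) :
    (1 / 2) * (∫ s in Set.Ioo (0 : ℝ) 1,
        cNsp N s p *
          ∫ z in ((Ωᶜ) ×ˢ (Ωᶜ))ᶜ,
            Afun p (u z.1 - u z.2) * (v z.1 - v z.2) / dist z.1 z.2 ^ ((N : ℝ) + p * s)
            ∂(volume.prod volume) ∂μ)
      = (∫ s in Set.Ioo (0 : ℝ) 1,
          (∫ x in Ω,
            v x * (cNsp N s p *
              ∫ y, Afun p (u x - u y) / dist x y ^ ((N : ℝ) + p * s))) ∂μ)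
        + ∫ s in Set.Ioo (0 : ℝ) 1,
            (∫ x in Ωᶜ,
              v x * (cNsp N s p *
                ∫ y in Ω, Afun p (u x - u y) / dist x y ^ ((N : ℝ) + p * s))) ∂μ := by
  simpa only [fracPLaplaceKernel, mul_assoc, div_mul_eq_mul_div, integral_const_mul] using
    statement10_general (v := v) hΩ (fracPLaplaceKernel_swap N p u)
      (by simpa only [fracPLaplaceKernel, mul_assoc, div_mul_eq_mul_div] using hint2)
      (by simpa only [fracPLaplaceKernel, mul_assoc, div_mul_eq_mul_div] using hint3)
end

section
/- Let p ≥ 2. There exists a constant C > 0, depending only on p, such that the following holds. Let (X, ν) be a measure space, let d ≥ 1, and let f, g : X → ℝ^d be measurable. Then ∫_X |f − g|^p dν ≤ C · ∫_X ( |f|^{p−2} f − |g|^{p−2} g ) · ( f − g ) dν, where the integrand on the right-hand side is nonnegative and both sides are interpreted as integrals of nonnegative functions with values in [0, +∞]. -/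
open MeasureTheory
open scoped ENNReal RealInnerProductSpace

/-!
For any scalars `α`, `β`,
`2 ⟪α • a - β • b, a - b⟫ = (α + β) ‖a - b‖² + (α - β) (‖a‖² - ‖b‖²)`.
With `α = ‖a‖ ^ (p - 2)` and `β = ‖b‖ ^ (p - 2)` the last product is nonnegative, since its two
factors never have opposite signs, while `2 ^ (p - 2) (α + β)` dominates `‖a - b‖ ^ (p - 2)`.
This gives the inequality pointwise, with constant `2 ^ (p - 1)`.
-/

section Real

variable {q x y : ℝ}

theorem add_rpow_le_two_rpow_mul_rpow_add_rpow (hq : 0 ≤ q) (hx : 0 ≤ x) (hy : 0 ≤ y) :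
    (x + y) ^ q ≤ 2 ^ q * (x ^ q + y ^ q) := by
  lift x to NNReal using hx
  lift y to NNReal using hy
  have h := ENNReal.add_rpow_le_two_rpow_mul_rpow_add_rpow (x : ℝ≥0∞) (y : ℝ≥0∞) hq
  rw [← ENNReal.coe_ofNat] at h
  simp only [← ENNReal.coe_rpow_of_nonneg _ hq] at h
  exact_mod_cast h

theorem rpow_sub_rpow_mul_pow_sub_pow_nonneg (hq : 0 ≤ q) (hx : 0 ≤ x) (hy : 0 ≤ y) (n : ℕ) :
    0 ≤ (x ^ q - y ^ q) * (x ^ n - y ^ n) := by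
  have hmono : MonovaryOn (fun t : ℝ ↦ t ^ q) (fun t ↦ t ^ n) (Set.Ici 0) :=
    (Real.monotoneOn_rpow_Ici_of_exponent_nonneg hq).monovaryOn pow_left_monotoneOn
  exact hmono.sub_mul_sub_nonneg hy hx

end Real

section InnerProductSpace

variable {E : Type*} [SeminormedAddCommGroup E] [InnerProductSpace ℝ E] {p q : ℝ}

theorem two_mul_inner_smul_sub_smul_sub (α β : ℝ) (a b : E) :
    2 * ⟪α • a - β • b, a - b⟫ =
      (α + β) * ‖a - b‖ ^ 2 + (α - β) * (‖a‖ ^ 2 - ‖b‖ ^ 2) := by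
  rw [norm_sub_sq_real]
  simp only [inner_sub_left, inner_sub_right, real_inner_smul_left, real_inner_self_eq_norm_sq,
    real_inner_comm a b]
  ring

theorem add_rpow_norm_mul_norm_sub_sq_le (hq : 0 ≤ q) (a b : E) :
    (‖a‖ ^ q + ‖b‖ ^ q) * ‖a - b‖ ^ 2 ≤ 2 * ⟪‖a‖ ^ q • a - ‖b‖ ^ q • b, a - b⟫ := by
  rw [two_mul_inner_smul_sub_smul_sub]
  exact le_add_of_nonneg_right <|
    rpow_sub_rpow_mul_pow_sub_pow_nonneg hq (norm_nonneg a) (norm_nonneg b) 2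

theorem norm_sub_rpow_le_mul_inner (hp : 2 ≤ p) (a b : E) :
    ‖a - b‖ ^ p ≤
      2 ^ (p - 1) * ⟪‖a‖ ^ (p - 2) • a - ‖b‖ ^ (p - 2) • b, a - b⟫ := by
  have hq : 0 ≤ p - 2 := sub_nonneg.2 hp
  calc ‖a - b‖ ^ p = ‖a - b‖ ^ (p - 2) * ‖a - b‖ ^ 2 := by
        rw [← Real.rpow_add_natCast' (norm_nonneg _) (by push_cast; linarith)]
        norm_num
    _ ≤ (‖a‖ + ‖b‖) ^ (p - 2) * ‖a - b‖ ^ 2 := by gcongr; exact norm_sub_le a b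
    _ ≤ 2 ^ (p - 2) * (‖a‖ ^ (p - 2) + ‖b‖ ^ (p - 2)) * ‖a - b‖ ^ 2 := by
        gcongr
        exact add_rpow_le_two_rpow_mul_rpow_add_rpow hq (norm_nonneg a) (norm_nonneg b)
    _ ≤ 2 ^ (p - 2) * (2 * ⟪‖a‖ ^ (p - 2) • a - ‖b‖ ^ (p - 2) • b, a - b⟫) := by
        rw [mul_assoc]
        gcongr ?_ * ?_
        exact add_rpow_norm_mul_norm_sub_sq_le hq a b
    _ = 2 ^ (p - 1) * ⟪‖a‖ ^ (p - 2) • a - ‖b‖ ^ (p - 2) • b, a - b⟫ := by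
        rw [← mul_assoc, ← Real.rpow_add_one two_ne_zero]
        ring_nf

theorem statement12_general (hp : 2 ≤ p) {X : Type*} [MeasurableSpace X] (ν : Measure X)
    (f g : X → E) :
    ∫⁻ x, ENNReal.ofReal (‖f x - g x‖ ^ p) ∂ν ≤
      ENNReal.ofReal (2 ^ (p - 1)) *
        ∫⁻ x, ENNReal.ofReal
          ⟪‖f x‖ ^ (p - 2) • f x - ‖g x‖ ^ (p - 2) • g x, f x - g x⟫ ∂ν := by
  rw [← lintegral_const_mul' _ _ ENNReal.ofReal_ne_top]
  gcongr with x
  rw [← ENNReal.ofReal_mul (by positivity)]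
  exact ENNReal.ofReal_le_ofReal (norm_sub_rpow_le_mul_inner hp (f x) (g x))

end InnerProductSpace

theorem statement12 (p : ℝ) (hp : 2 ≤ p) :
    ∃ C : ℝ, 0 < C ∧
      ∀ (X : Type) (_ : MeasurableSpace X) (ν : Measure X) (d : ℕ), 1 ≤ d →
        ∀ f g : X → EuclideanSpace ℝ (Fin d), Measurable f → Measurable g →
          (∫⁻ x, ENNReal.ofReal (‖f x - g x‖ ^ p) ∂ν)
            ≤ ENNReal.ofReal C *
                ∫⁻ x, ENNReal.ofReal
                  ⟪‖f x‖ ^ (p - 2) • f x - ‖g x‖ ^ (p - 2) • g x, f x - g x⟫ ∂ν :=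
  ⟨2 ^ (p - 1), by positivity, fun _ _ ν _ _ f g _ _ ↦ statement12_general hp ν f g⟩
end

section
/- Let 1 < p < 2. There exists a constant C > 0, depending only on p, such that the following holds. Let (X, ν) be a measure space, let d ≥ 1, and let f, g : X → ℝ^d be measurable with ∫_X ( |f|^p + |g|^p ) dν < +∞. Then ∫_X |f − g|^p dν ≤ C · ( ∫_X ( |f|^{p−2} f − |g|^{p−2} g ) · ( f − g ) dν )^{p/2} · ( ∫_X ( |f|^p + |g|^p ) dν )^{(2−p)/2}, where the integrand (|f|^{p−2} f − |g|^{p−2} g)·(f − g) is nonnegative and its integral is interpreted with values in [0, +∞]. -/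
open MeasureTheory
open scoped ENNReal RealInnerProductSpace

/-!
Splitting into a radial and an angular part, for `u = ‖a‖ ^ (p - 2)` and `v = ‖b‖ ^ (p - 2)`,
`⟪u • a - v • b, a - b⟫ = (u‖a‖ - v‖b‖) (‖a‖ - ‖b‖) + (u + v) (‖a‖‖b‖ - ⟪a, b⟫)`,
while `‖a - b‖ ^ 2` is the same expression with `u = v = 1`. Comparing the two parts, by weighted
AM-GM and by Cauchy-Schwarz, gives `(p - 1) ‖a - b‖ ^ 2 ≤ M ^ (2 - p) ⟪u • a - v • b, a - b⟫` with
`M = max ‖a‖ ‖b‖`. The power `p / 2` of this bound is integrated with Hölder's inequality for the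
exponents `p / 2` and `(2 - p) / 2`.
-/

theorem mul_sub_le_rpow_mul_rpow_sub_rpow {q s t : ℝ} (hq0 : 0 ≤ q) (hq1 : q ≤ 1) (hs : 0 ≤ s)
    (ht : 0 ≤ t) : q * (s - t) ≤ s ^ (1 - q) * (s ^ q - t ^ q) := by
  have amgm : s ^ (1 - q) * t ^ q ≤ (1 - q) * s + q * t :=
    Real.geom_mean_le_arith_mean2_weighted (sub_nonneg.2 hq1) hq0 hs ht (sub_add_cancel 1 q)
  have split : s ^ (1 - q) * s ^ q = s := by
    rw [← Real.rpow_add_of_nonneg hs (sub_nonneg.2 hq1) hq0, sub_add_cancel, Real.rpow_one]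
  linarith

theorem max_rpow_le_rpow_add_rpow {p s t : ℝ} (hs : 0 ≤ s) (ht : 0 ≤ t) :
    max s t ^ p ≤ s ^ p + t ^ p := by
  rcases max_choice s t with h | h <;> rw [h]
  · exact le_add_of_nonneg_right (Real.rpow_nonneg ht p)
  · exact le_add_of_nonneg_left (Real.rpow_nonneg hs p)

theorem rpow_sub_two_mul_self {p s : ℝ} (hp : p ≠ 1) (hs : 0 ≤ s) :
    s ^ (p - 2) * s = s ^ (p - 1) := by
  have exponent : p - 2 + 1 = p - 1 := by ring
  rw [← Real.rpow_add_one' hs (exponent ▸ sub_ne_zero.2 hp), exponent]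

section InnerProductSpace

variable {E : Type*} [NormedAddCommGroup E] [InnerProductSpace ℝ E]

theorem inner_smul_sub_smul_sub (u v : ℝ) (a b : E) :
    ⟪u • a - v • b, a - b⟫ =
      (u * ‖a‖ - v * ‖b‖) * (‖a‖ - ‖b‖) + (u + v) * (‖a‖ * ‖b‖ - ⟪a, b⟫) := by
  simp only [inner_sub_left, inner_sub_right, real_inner_smul_left, real_inner_self_eq_norm_sq,
    real_inner_comm a b]
  ring

theorem norm_sub_sq_eq_radial_add_angular (a b : E) :
    ‖a - b‖ ^ 2 = (‖a‖ - ‖b‖) ^ 2 + 2 * (‖a‖ * ‖b‖ - ⟪a, b⟫) := by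
  rw [norm_sub_sq_real]
  ring

variable {p : ℝ}

theorem inner_rpow_smul_sub_rpow_smul_nonneg (hp : 1 < p) (a b : E) :
    0 ≤ ⟪‖a‖ ^ (p - 2) • a - ‖b‖ ^ (p - 2) • b, a - b⟫ := by
  have radial : 0 ≤ (‖a‖ ^ (p - 1) - ‖b‖ ^ (p - 1)) * (‖a‖ - ‖b‖) := by
    rcases le_total ‖a‖ ‖b‖ with h | h
    · exact mul_nonneg_of_nonpos_of_nonpos
        (sub_nonpos.2 (Real.rpow_le_rpow (norm_nonneg a) h (by linarith))) (sub_nonpos.2 h)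
    · exact mul_nonneg
        (sub_nonneg.2 (Real.rpow_le_rpow (norm_nonneg b) h (by linarith))) (sub_nonneg.2 h)
  have angular : 0 ≤ ‖a‖ * ‖b‖ - ⟪a, b⟫ := sub_nonneg.2 (real_inner_le_norm a b)
  rw [inner_smul_sub_smul_sub, rpow_sub_two_mul_self hp.ne' (norm_nonneg a),
    rpow_sub_two_mul_self hp.ne' (norm_nonneg b)]
  positivity

theorem sub_one_mul_norm_sub_sq_le_of_norm_le (hp1 : 1 < p) (hp2 : p ≤ 2) {a b : E}
    (hab : ‖b‖ ≤ ‖a‖) :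
    (p - 1) * ‖a - b‖ ^ 2 ≤
      ‖a‖ ^ (2 - p) * ⟪‖a‖ ^ (p - 2) • a - ‖b‖ ^ (p - 2) • b, a - b⟫ := by
  rcases eq_or_ne a 0 with rfl | ha
  · obtain rfl : b = 0 := by simpa using hab
    simp
  have ha : 0 < ‖a‖ := norm_pos_iff.2 ha
  have cancel : ‖a‖ ^ (2 - p) * ‖a‖ ^ (p - 2) = 1 := by
    rw [← Real.rpow_add ha]
    simp
  rcases eq_or_ne b 0 with rfl | hb
  · simp only [smul_zero, sub_zero, real_inner_smul_left, real_inner_self_eq_norm_sq]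
    rw [← mul_assoc, cancel]
    gcongr
    linarith
  have hb : 0 < ‖b‖ := norm_pos_iff.2 hb
  have radial : (p - 1) * (‖a‖ - ‖b‖) ≤ ‖a‖ ^ (2 - p) * (‖a‖ ^ (p - 1) - ‖b‖ ^ (p - 1)) := by
    have := mul_sub_le_rpow_mul_rpow_sub_rpow (q := p - 1) (by linarith) (by linarith) ha.le hb.le
    rwa [show 1 - (p - 1) = 2 - p by ring] at this
  have angular : 2 * (p - 1) ≤ ‖a‖ ^ (2 - p) * (‖a‖ ^ (p - 2) + ‖b‖ ^ (p - 2)) := by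
    have antitone : ‖a‖ ^ (p - 2) ≤ ‖b‖ ^ (p - 2) :=
      Real.rpow_le_rpow_of_nonpos hb hab (by linarith)
    calc 2 * (p - 1) ≤ 2 * (‖a‖ ^ (2 - p) * ‖a‖ ^ (p - 2)) := by linarith
      _ = ‖a‖ ^ (2 - p) * (‖a‖ ^ (p - 2) + ‖a‖ ^ (p - 2)) := by ring
      _ ≤ ‖a‖ ^ (2 - p) * (‖a‖ ^ (p - 2) + ‖b‖ ^ (p - 2)) := by gcongr
  rw [inner_smul_sub_smul_sub, norm_sub_sq_eq_radial_add_angular,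
    rpow_sub_two_mul_self hp1.ne' ha.le, rpow_sub_two_mul_self hp1.ne' hb.le]
  linarith [mul_le_mul_of_nonneg_right radial (sub_nonneg.2 hab),
    mul_le_mul_of_nonneg_right angular (sub_nonneg.2 (real_inner_le_norm a b))]

theorem sub_one_mul_norm_sub_sq_le (hp1 : 1 < p) (hp2 : p ≤ 2) (a b : E) :
    (p - 1) * ‖a - b‖ ^ 2 ≤
      max ‖a‖ ‖b‖ ^ (2 - p) * ⟪‖a‖ ^ (p - 2) • a - ‖b‖ ^ (p - 2) • b, a - b⟫ := by
  rcases le_total ‖b‖ ‖a‖ with h | h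
  · rw [max_eq_left h]
    exact sub_one_mul_norm_sub_sq_le_of_norm_le hp1 hp2 h
  · rw [max_eq_right h, norm_sub_rev, ← inner_neg_neg, neg_sub, neg_sub]
    exact sub_one_mul_norm_sub_sq_le_of_norm_le hp1 hp2 h

theorem norm_sub_rpow_le (hp1 : 1 < p) (hp2 : p ≤ 2) (a b : E) :
    ‖a - b‖ ^ p ≤ (p - 1)⁻¹ ^ (p / 2) *
      (⟪‖a‖ ^ (p - 2) • a - ‖b‖ ^ (p - 2) • b, a - b⟫ ^ (p / 2) *
        (‖a‖ ^ p + ‖b‖ ^ p) ^ ((2 - p) / 2)) := by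
  have hI := inner_rpow_smul_sub_rpow_smul_nonneg hp1 a b
  have hsq := sub_one_mul_norm_sub_sq_le hp1 hp2 a b
  set I := ⟪‖a‖ ^ (p - 2) • a - ‖b‖ ^ (p - 2) • b, a - b⟫
  set M := max ‖a‖ ‖b‖
  have hp : 0 < p - 1 := sub_pos.2 hp1
  have hM : 0 ≤ M := le_max_of_le_left (norm_nonneg a)
  calc ‖a - b‖ ^ p = (‖a - b‖ ^ 2) ^ (p / 2) := by
        rw [← Real.rpow_natCast_mul (norm_nonneg _)]
        norm_num [mul_div_cancel₀]
    _ ≤ ((p - 1)⁻¹ * (I * M ^ (2 - p))) ^ (p / 2) := by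
        gcongr
        rwa [le_inv_mul_iff₀ hp, mul_comm I]
    _ = (p - 1)⁻¹ ^ (p / 2) * (I ^ (p / 2) * (M ^ p) ^ ((2 - p) / 2)) := by
        rw [Real.mul_rpow (by positivity) (by positivity), Real.mul_rpow hI (by positivity),
          ← Real.rpow_mul hM, ← Real.rpow_mul hM]
        ring_nf
    _ ≤ (p - 1)⁻¹ ^ (p / 2) * (I ^ (p / 2) * (‖a‖ ^ p + ‖b‖ ^ p) ^ ((2 - p) / 2)) := by
        gcongr
        exact max_rpow_le_rpow_add_rpow (norm_nonneg a) (norm_nonneg b)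

end InnerProductSpace

section Lintegral

variable {X : Type*} [MeasurableSpace X] {ν : Measure X}

theorem lintegral_ofReal_le_of_le_mul_rpow_mul_rpow {F I G : X → ℝ} {C r s : ℝ}
    (hI : AEMeasurable I ν) (hG : AEMeasurable G ν) (hI0 : ∀ x, 0 ≤ I x) (hG0 : ∀ x, 0 ≤ G x)
    (hC : 0 ≤ C) (hr : 0 ≤ r) (hs : 0 ≤ s) (hrs : r + s = 1)
    (hF : ∀ x, F x ≤ C * (I x ^ r * G x ^ s)) :
    ∫⁻ x, ENNReal.ofReal (F x) ∂ν ≤ ENNReal.ofReal C *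
      (∫⁻ x, ENNReal.ofReal (I x) ∂ν) ^ r * (∫⁻ x, ENNReal.ofReal (G x) ∂ν) ^ s := by
  calc ∫⁻ x, ENNReal.ofReal (F x) ∂ν
      ≤ ∫⁻ x, ENNReal.ofReal C * (ENNReal.ofReal (I x) ^ r * ENNReal.ofReal (G x) ^ s) ∂ν := by
        refine lintegral_mono fun x => (ENNReal.ofReal_le_ofReal (hF x)).trans_eq ?_
        rw [ENNReal.ofReal_mul hC, ENNReal.ofReal_mul (Real.rpow_nonneg (hI0 x) r),
          ENNReal.ofReal_rpow_of_nonneg (hI0 x) hr, ENNReal.ofReal_rpow_of_nonneg (hG0 x) hs]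
    _ = ENNReal.ofReal C * ∫⁻ x, ENNReal.ofReal (I x) ^ r * ENNReal.ofReal (G x) ^ s ∂ν :=
        lintegral_const_mul' _ _ ENNReal.ofReal_ne_top
    _ ≤ ENNReal.ofReal C *
          ((∫⁻ x, ENNReal.ofReal (I x) ∂ν) ^ r * (∫⁻ x, ENNReal.ofReal (G x) ∂ν) ^ s) := by
        gcongr
        exact ENNReal.lintegral_mul_norm_pow_le hI.ennreal_ofReal hG.ennreal_ofReal hr hs hrs
    _ = _ := (mul_assoc _ _ _).symm

theorem statement13_general {E : Type*} [NormedAddCommGroup E] [InnerProductSpace ℝ E] {p : ℝ}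
    (hp1 : 1 < p) (hp2 : p ≤ 2) {f g : X → E} (hf : AEStronglyMeasurable f ν)
    (hg : AEStronglyMeasurable g ν) :
    ∫⁻ x, ENNReal.ofReal (‖f x - g x‖ ^ p) ∂ν ≤
      ENNReal.ofReal ((p - 1)⁻¹ ^ (p / 2)) *
        (∫⁻ x, ENNReal.ofReal
          ⟪‖f x‖ ^ (p - 2) • f x - ‖g x‖ ^ (p - 2) • g x, f x - g x⟫ ∂ν) ^ (p / 2) *
        (∫⁻ x, ENNReal.ofReal (‖f x‖ ^ p + ‖g x‖ ^ p) ∂ν) ^ ((2 - p) / 2) := by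
  have aemeasurable_norm_rpow {h : X → E} (hh : AEStronglyMeasurable h ν) (q : ℝ) :
      AEMeasurable (fun x => ‖h x‖ ^ q) ν := hh.norm.aemeasurable.pow_const q
  have aestronglyMeasurable_rpow_smul {h : X → E} (hh : AEStronglyMeasurable h ν) :
      AEStronglyMeasurable (fun x => ‖h x‖ ^ (p - 2) • h x) ν :=
    (aemeasurable_norm_rpow hh _).aestronglyMeasurable.smul hh
  exact lintegral_ofReal_le_of_le_mul_rpow_mul_rpow
    (((aestronglyMeasurable_rpow_smul hf).sub (aestronglyMeasurable_rpow_smul hg)).inner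
      (hf.sub hg)).aemeasurable
    ((aemeasurable_norm_rpow hf p).add (aemeasurable_norm_rpow hg p))
    (fun x => inner_rpow_smul_sub_rpow_smul_nonneg hp1 (f x) (g x)) (fun x => by positivity)
    (Real.rpow_nonneg (inv_nonneg.2 (sub_pos.2 hp1).le) _) (by linarith) (by linarith) (by ring)
    (fun x => norm_sub_rpow_le hp1 hp2 (f x) (g x))

end Lintegral

theorem statement13 (p : ℝ) (hp1 : 1 < p) (hp2 : p < 2) :
    ∃ C : ℝ, 0 < C ∧
      ∀ (X : Type) (_ : MeasurableSpace X) (ν : Measure X) (d : ℕ), 1 ≤ d →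
        ∀ f g : X → EuclideanSpace ℝ (Fin d), Measurable f → Measurable g →
          (∫⁻ x, ENNReal.ofReal (‖f x‖ ^ p + ‖g x‖ ^ p) ∂ν) < ⊤ →
          (∫⁻ x, ENNReal.ofReal (‖f x - g x‖ ^ p) ∂ν)
            ≤ ENNReal.ofReal C *
                (∫⁻ x, ENNReal.ofReal
                  ⟪‖f x‖ ^ (p - 2) • f x - ‖g x‖ ^ (p - 2) • g x, f x - g x⟫ ∂ν) ^ (p / 2) *
                (∫⁻ x, ENNReal.ofReal (‖f x‖ ^ p + ‖g x‖ ^ p) ∂ν) ^ ((2 - p) / 2) :=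
  ⟨(p - 1)⁻¹ ^ (p / 2), Real.rpow_pos_of_pos (inv_pos.2 (sub_pos.2 hp1)) _,
    fun _ _ _ _ _ _ _ hf hg _ => statement13_general hp1 hp2.le hf.aestronglyMeasurable
      hg.aestronglyMeasurable⟩
end
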